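/- arXiv:0709.1734 — 3 statements merged into one kernel-verified Lean document; each statement's English description precedes it below -/
import Mathlib

section
/- For every α ≠ 0, the 5×4 matrix G·M(α) has rank 4; equivalently, its left nullspace {v ∈ ℝ⁵ : vᵀ·(G·M(α)) = 0} is one-dimensional and is spanned by w(α). -/
/-!
Write `a = |α| > 0`. The product `G * M` is an explicit 5×4 matrix. Its columns are independent:
if `(G * M) x = 0`, the first three rows give `x₃ = 0` and `x₀ = x₁ = x₂`, and the fourth row then
gives `(Kp + Km) * a * x₀ = 0`. For the left nullspace, the sum of the first three column equations
is `(Kp + Km) * a * v₃ = -2 * a * v₄`, so every coordinate of `v` is determined by `v₄`, which is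
the scalar multiplying `w`.
-/

open Matrix

/-- For `α ≠ 0`, the 5×4 matrix `G·M(α)` has rank 4; equivalently its left
nullspace is one-dimensional, spanned by `w(α)`. -/
theorem stmt_2 (Kp Km : ℝ) (hKp : 0 < Kp) (hKm : 0 < Km)
    (G : Matrix (Fin 5) (Fin 8) ℝ)
    (hG : G = !![0, 0, 0, 0, 0, 0, 0, 1;
                 0, 0, 0, 0, 1, -1, 0, 0;
                 0, 0, 0, 0, 0, 1, -1, 0;
                 Kp, -Km, 0, 1, 0, 0, 0, 0;
                 0, -1, 1, -1, 0, 0, 0, 0])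
    (α : ℝ) (hα : α ≠ 0)
    (M : Matrix (Fin 8) (Fin 4) ℝ)
    (hM : M = !![-|α|, 0, 0, 0;
                 0, |α|, 0, 0;
                 0, 0, -|α|, 0;
                 0, 0, 0, |α|;
                 1, 0, 0, 0;
                 0, 1, 0, 0;
                 0, 0, 1, 0;
                 0, 0, 0, 1])
    (w : Fin 5 → ℝ)
    (hw : w = ![(Kp + Km + 2) * |α| / (Kp + Km), -2 * Kp * |α| / (Kp + Km),
                -|α|, -2 / (Kp + Km), 1]) :
    (G * M).rank = 4 ∧
    ∀ v : Fin 5 → ℝ, v ᵥ* (G * M) = 0 ↔ ∃ t : ℝ, v = t • w := by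
  have ha : 0 < |α| := abs_pos.mpr hα
  generalize |α| = a at *
  have hK : 0 < Kp + Km := by positivity
  have hGM : G * M = !![0, 0, 0, 1;
                        1, -1, 0, 0;
                        0, 1, -1, 0;
                        -(Kp * a), -(Km * a), 0, a;
                        0, -a, -a, -a] := by
    subst hG hM
    ext i j
    fin_cases i <;> fin_cases j <;> simp [Matrix.mul_apply, Fin.sum_univ_succ]
  rw [hGM]
  constructor
  · rw [Matrix.rank, LinearMap.finrank_range_of_inj]
    · simp
    · rw [← LinearMap.ker_eq_bot, LinearMap.ker_eq_bot']
      intro x hx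
      have h0 := congrFun hx 0
      have h1 := congrFun hx 1
      have h2 := congrFun hx 2
      have h3 := congrFun hx 3
      simp [Matrix.mulVec, dotProduct, Fin.sum_univ_succ] at h0 h1 h2 h3
      have e1 : x 1 = x 0 := by linarith
      have e2 : x 2 = x 0 := by linarith
      have e0 : x 0 = 0 := by
        have h : (Kp + Km) * a * x 0 = 0 := by
          rw [h0, e1] at h3
          linarith
        exact (mul_eq_zero.mp h).resolve_left (by positivity)
      ext i
      fin_cases i <;> simp [h0, e1, e2, e0]
  · intro v
    constructor
    · intro hv
      have h0 := congrFun hv 0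
      have h1 := congrFun hv 1
      have h2 := congrFun hv 2
      have h3 := congrFun hv 3
      simp [Matrix.vecMul, dotProduct, Fin.sum_univ_succ] at h0 h1 h2 h3
      have e3 : v 3 = v 4 * (-2 / (Kp + Km)) := by
        have h : a * ((Kp + Km) * v 3 + 2 * v 4) = 0 := by linarith
        have h' := (mul_eq_zero.mp h).resolve_left ha.ne'
        field_simp
        linarith
      have e2 : v 2 = -(v 4 * a) := by linarith
      have e1 : v 1 = v 4 * (-2 * Kp * a / (Kp + Km)) := by
        have h : v 1 = Kp * a * v 3 := by linarith
        rw [h, e3]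
        ring
      have e0 : v 0 = v 4 * ((Kp + Km + 2) * a / (Kp + Km)) := by
        have h : v 0 = a * v 4 - a * v 3 := by linarith
        rw [h, e3]
        field_simp
        ring
      refine ⟨v 4, ?_⟩
      subst hw
      ext i
      fin_cases i
      · simpa using e0
      · simpa using e1
      · simpa using e2
      · simpa using e3
      · simp
    · rintro ⟨t, rfl⟩
      subst hw
      ext j
      fin_cases j <;> simp [Matrix.vecMul, dotProduct, Fin.sum_univ_succ] <;> field_simp <;> ring
end

section
/- Fix α, β ∈ ℝ not both zero and set k = √(α² + β²). Then w₃ᵀ·(G·M₃) = 0, and for all q₁, q₂ ∈ ℝ, w₃ᵀ·(G·U(q₁,q₂)) = 2k·((K⁺−K⁻)·q₁ + (K⁺+K⁻+2)·q₂)/(K⁺+K⁻). -/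
/-!
By associativity both claims concern the single row vector `w₃ᵀ·G`, which is computed
explicitly (`hwG`). Pairing it with the columns of `M₃` and with `U q₁ q₂` leaves rational
identities whose only denominators are `Kp` and `Kp + Km`, both nonzero by positivity.
-/

open Matrix

/-- 3-D version: with `k = √(α²+β²)` for `α, β` not both zero, `w₃ᵀ·(G·M₃) = 0`,
and `w₃ᵀ·(G·U(q₁,q₂)) = 2k((K⁺−K⁻)q₁+(K⁺+K⁻+2)q₂)/(K⁺+K⁻)` for all `q₁, q₂`. -/
theorem stmt_9 (Kp Km : ℝ) (hKp : 0 < Kp) (hKm : 0 < Km)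
    (α β : ℝ) (hαβ : ¬(α = 0 ∧ β = 0))
    (k : ℝ) (hk : k = Real.sqrt (α ^ 2 + β ^ 2))
    (G : Matrix (Fin 5) (Fin 8) ℝ)
    (hG : G = !![0, 0, 0, 0, 0, 0, 0, 1;
                 0, 0, 0, 0, 1, -1, 0, 0;
                 0, 0, 0, 0, 0, 1, -1, 0;
                 Kp, -Km, 0, 1, 0, 0, 0, 0;
                 0, -1, 1, -1, 0, 0, 0, 0])
    (M₃ : Matrix (Fin 8) (Fin 4) ℝ)
    (hM₃ : M₃ = !![-k, 0, 0, 0;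
                   0, k, 0, 0;
                   0, 0, -k, 0;
                   0, 0, 0, k;
                   1, 0, 0, 0;
                   0, 1, 0, 0;
                   0, 0, 1, 0;
                   0, 0, 0, 1])
    (w₃ : Fin 5 → ℝ)
    (hw₃ : w₃ = ![(Kp + Km + 2) * k / (Kp + Km), -2 * Kp * k / (Kp + Km),
                  -k, -2 / (Kp + Km), 1])
    (U : ℝ → ℝ → Fin 8 → ℝ)
    (hU : ∀ q₁ q₂ : ℝ, U q₁ q₂ =
      ![0, 0, 0, 0, (Km * q₁ - q₂) / Kp, q₁, q₁ + q₂, q₂]) :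
    w₃ ᵥ* (G * M₃) = 0 ∧
    ∀ q₁ q₂ : ℝ,
      w₃ ⬝ᵥ (G *ᵥ U q₁ q₂) =
        2 * k * ((Kp - Km) * q₁ + (Kp + Km + 2) * q₂) / (Kp + Km) := by
  have hS : Kp + Km ≠ 0 := by positivity
  have hKp0 : Kp ≠ 0 := by positivity
  have hwG : w₃ ᵥ* G =
      ![-2 * Kp / (Kp + Km), 2 * Km / (Kp + Km) - 1, 1, -2 / (Kp + Km) - 1,
        -2 * Kp * k / (Kp + Km), -k + 2 * Kp * k / (Kp + Km), k,
        (Kp + Km + 2) * k / (Kp + Km)] := by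
    subst hG hw₃
    ext j
    fin_cases j <;> simp [vecMul, dotProduct, Fin.sum_univ_succ] <;> ring
  constructor
  · rw [← vecMul_vecMul, hwG, hM₃]
    ext j
    fin_cases j <;> simp [vecMul, dotProduct, Fin.sum_univ_succ] <;> field_simp <;> ring
  · intro q₁ q₂
    rw [dotProduct_mulVec, hwG, hU]
    simp [dotProduct, Fin.sum_univ_succ]
    field_simp
    ring
end

section
/- Let h : ℝ → ℝ be twice continuously differentiable with h(x) > 0 for all x, and let T : ℝ² → ℝ be twice continuously differentiable. Define u : ℝ² → ℝ by u(x,y) = T(x, y·h(x)). Then for every (x,y) ∈ ℝ²: (∂²T/∂x² + ∂²T/∂y²)(x, y·h(x)) = ((1 + h'(x)²·y²)/h(x)²)·∂²u/∂y²(x,y) + ∂²u/∂x²(x,y) − (2·y·h'(x)/h(x))·∂²u/∂x∂y(x,y) + ((2·h'(x)² − h''(x)·h(x))/h(x)²)·y·∂u/∂y(x,y). -/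
/-!
With `T₁, T₂` the first partial derivatives of `T` (evaluated at `(x, y h)`), the chain rule gives
`u_y = h T₂`, `u_yy = h² T₂₂`, `u_x = T₁ + y h' T₂`,
`u_xy = h' T₂ + h (T₂₁ + y h' T₂₂)` and
`u_xx = T₁₁ + y h' T₁₂ + y h'' T₂ + y h' (T₂₁ + y h' T₂₂)`.
Substituting these, and using `T₁₂ = T₂₁`, the right-hand side collapses to `T₁₁ + T₂₂`.
All derivatives are computed by one chain rule along a plane curve, `hasDerivAt_comp_curve`.
-/

/-- The directional derivative of `F` in the constant direction `v`; the directions `(1, 0)` and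
`(0, 1)` give the two partial derivatives. -/
noncomputable def dirDeriv (v : ℝ × ℝ) (F : ℝ × ℝ → ℝ) (p : ℝ × ℝ) : ℝ := fderiv ℝ F p v

/-- Chain rule along a curve `t ↦ (f t, g t)`, in terms of the partial derivatives of `F`. -/
lemma hasDerivAt_comp_curve {F : ℝ × ℝ → ℝ} (hF : Differentiable ℝ F) {f g : ℝ → ℝ}
    {f' g' t : ℝ} (hf : HasDerivAt f f' t) (hg : HasDerivAt g g' t) :
    HasDerivAt (fun s => F (f s, g s))
      (f' * dirDeriv (1, 0) F (f t, g t) + g' * dirDeriv (0, 1) F (f t, g t)) t := by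
  have key := (hF (f t, g t)).hasFDerivAt.comp_hasDerivAt t (hf.prodMk hg)
  have e : ((f', g') : ℝ × ℝ) = f' • ((1, 0) : ℝ × ℝ) + g' • ((0, 1) : ℝ × ℝ) := by simp
  rw [e, map_add, map_smul, map_smul] at key
  exact key

lemma differentiable_dirDeriv {F : ℝ × ℝ → ℝ} (hF : ContDiff ℝ 2 F) (v : ℝ × ℝ) :
    Differentiable ℝ (dirDeriv v F) := by
  have h1 : ContDiff ℝ 1 (fderiv ℝ F) := hF.fderiv_right (by norm_num)
  exact (h1.differentiable one_ne_zero).clm_apply (differentiable_const v)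

/-- Equality of mixed second partial derivatives of a `C²` function. -/
lemma dirDeriv_comm {F : ℝ × ℝ → ℝ} (hF : ContDiff ℝ 2 F) (v w p : ℝ × ℝ) :
    dirDeriv v (dirDeriv w F) p = dirDeriv w (dirDeriv v F) p := by
  have h1 : ContDiff ℝ 1 (fderiv ℝ F) := hF.fderiv_right (by norm_num)
  have h2 := h1.differentiable one_ne_zero p
  have hs : IsSymmSndFDerivAt ℝ F p := hF.contDiffAt.isSymmSndFDerivAt (by simp)
  have e : ∀ a b : ℝ × ℝ, dirDeriv a (dirDeriv b F) p = fderiv ℝ (fderiv ℝ F) p a b := by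
    intro a b
    change fderiv ℝ (fun q => fderiv ℝ F q b) p a = _
    rw [fderiv_clm_apply h2 (differentiableAt_const b)]
    simp
  rw [e, e, hs.eq]

/-- Change of variables formula for the Laplacian under the mapping
`u(x,y) = T(x, y·h(x))`. -/
theorem stmt_16 (h : ℝ → ℝ) (hh : ContDiff ℝ 2 h) (hpos : ∀ x, 0 < h x)
    (T : ℝ × ℝ → ℝ) (hT : ContDiff ℝ 2 T)
    (u : ℝ → ℝ → ℝ) (hu : ∀ x y : ℝ, u x y = T (x, y * h x)) :
    ∀ x y : ℝ,
      iteratedDeriv 2 (fun a => T (a, y * h x)) x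
        + iteratedDeriv 2 (fun b => T (x, b)) (y * h x)
      = ((1 + (deriv h x) ^ 2 * y ^ 2) / (h x) ^ 2)
          * iteratedDeriv 2 (fun b => u x b) y
        + iteratedDeriv 2 (fun a => u a y) x
        - (2 * y * deriv h x / h x)
          * deriv (fun a => deriv (fun b => u a b) y) x
        + ((2 * (deriv h x) ^ 2 - deriv (deriv h) x * h x) / (h x) ^ 2) * y
          * deriv (fun b => u x b) y := by
  intro x y
  have hTd : Differentiable ℝ T := hT.differentiable two_ne_zero
  have hPd := differentiable_dirDeriv hT (1, 0)
  have hQd := differentiable_dirDeriv hT (0, 1)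
  have hh' : ∀ a, HasDerivAt h (deriv h a) a := fun a =>
    (hh.differentiable two_ne_zero a).hasDerivAt
  have hh'' : HasDerivAt (deriv h) (deriv (deriv h) x) x := by
    have hc : ContDiff ℝ 1 (deriv h) :=
      ((contDiff_succ_iff_deriv (n := 1)).1 (by simpa [one_add_one_eq_two] using hh)).2.2
    exact (hc.differentiable one_ne_zero x).hasDerivAt
  have hyh : ∀ a, HasDerivAt (fun a => y * h a) (y * deriv h a) a := fun a => (hh' a).const_mul y
  have hbh : ∀ a b : ℝ, HasDerivAt (fun b => b * h a) (h a) b := fun a b => by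
    simpa using (hasDerivAt_id b).mul_const (h a)
  simp only [hu, iteratedDeriv_succ, iteratedDeriv_zero]
  have d1 : deriv (fun a => T (a, y * h x)) = fun a => dirDeriv (1, 0) T (a, y * h x) := by
    funext a
    simpa using (hasDerivAt_comp_curve hTd (hasDerivAt_id a) (hasDerivAt_const a (y * h x))).deriv
  have d2 : deriv (fun b => T (x, b)) = fun b => dirDeriv (0, 1) T (x, b) := by
    funext b
    simpa using (hasDerivAt_comp_curve hTd (hasDerivAt_const b x) (hasDerivAt_id b)).deriv
  have d3 : ∀ a, deriv (fun b => T (a, b * h a))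
      = fun b => h a * dirDeriv (0, 1) T (a, b * h a) := by
    intro a
    funext b
    simpa using (hasDerivAt_comp_curve hTd (hasDerivAt_const b a) (hbh a b)).deriv
  have d4 : deriv (fun a => T (a, y * h a)) = fun a => dirDeriv (1, 0) T (a, y * h a)
      + y * deriv h a * dirDeriv (0, 1) T (a, y * h a) := by
    funext a
    simpa using (hasDerivAt_comp_curve hTd (hasDerivAt_id a) (hyh a)).deriv
  have cP := hasDerivAt_comp_curve hPd (hasDerivAt_id x) (hyh x)
  have cQ := hasDerivAt_comp_curve hQd (hasDerivAt_id x) (hyh x)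
  have e1 := (hasDerivAt_comp_curve hPd (hasDerivAt_id x) (hasDerivAt_const x (y * h x))).deriv
  have e2 := (hasDerivAt_comp_curve hQd (hasDerivAt_const (y * h x) x)
    (hasDerivAt_id (y * h x))).deriv
  have e3 := ((hasDerivAt_comp_curve hQd (hasDerivAt_const y x) (hbh x y)).const_mul (h x)).deriv
  have e4 := (cP.add ((hh''.const_mul y).mul cQ)).deriv
  have e5 := ((hh' x).mul cQ).deriv
  simp only [id, Pi.add_def, Pi.mul_def] at e1 e2 e3 e4 e5
  simp only [d1, d2, d3, d4]
  rw [e1, e2, e3, e4, e5, dirDeriv_comm hT (0, 1) (1, 0)]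
  have hx := (hpos x).ne'
  field_simp
  ring
end
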